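/- Assume the domain condition (A_θ), that H : closure(θ) × ℝ^N × S^N → ℝ is uniformly continuous and satisfies the degenerate ellipticity and modulus conditions (A_H), and that H satisfies the radial monotonicity condition H(x, l·p, l·A) ≥ H(x,p,A) for all l ≥ 1. For each λ > 0 let V_λ be the constrained viscosity solution of λV(x) + H(x, DV(x), D²V(x)) = 0 on closure(θ) with λ·V_λ ∈ Lip_{M0}(closure(θ)) for a constant M0 > 0 independent of λ, and let w₀(x) := lim_{λ→0⁺} λ·V_λ(x). Then w₀ is the maximal viscosity subsolution of W + H̄(x, DW, D²W) = 0 on θ; explicitly, for every x ∈ closure(θ), w₀(x) = sup{ w(x) : w ∈ Lip_{M0}(closure(θ)) and w + H̄(x, Dw, D²w) ≤ 0 on θ in the viscosity sense }, where H̄(x,p,A) := min{ M0, sup_{l>0} H(x, l·p, l·A) }. -/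

import Mathlib

/-!
The structure condition on `H` bounds `|H(y,p,B) - H(x,p,A)|` whenever the block-diagonal matrix
`diag(A,B)` lies between `-(3/ε)·I` and `(3/ε)·[[I,-I],[-I,I]]`. At `x = y` the bound is
`ρ(0) = 0`, and the pair `A = t·I`, `B = -2t·I` is admissible (`blockIneq_scalar`), so
`H(x,p,t·I) = H(x,p,-2t·I)`. As `H` is monotone in the matrix variable and every symmetric matrix
lies between two such multiples of `I`, `H(x,p,A) = H(x,p,0)` for all symmetric `A` (`H_indep`).
The equation is thus of first order, with Hamiltonian `h(x,p) = H(x,p,0)`.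

* `limit_subsolution`: `λ·V_λ` is a subsolution of `W + h(x, DW/λ) ≤ 0`, hence, by radial
  monotonicity, of `W + h(x, l·DW) ≤ 0` as soon as `λ ≤ 1/l`. Stability of viscosity subsolutions
  passes this to `w₀`, and `l > 0` is arbitrary, so `w₀` belongs to the family.
* `comparison`: a member `w` of the family satisfies `w + min(M0, h(x, Dw/λ)) ≤ 0` in `θ`, while
  `λ·V_λ` is a supersolution of `W + h(x, DW/λ) ≥ 0` up to the boundary. Doubling variables with
  the penalisation `|(x-y)/ε - m(z)|² + |y-z|²`, whose shift by `m(z)` forces the point `x` into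
  `θ`, gives `w ≤ λ·V_λ`; the truncation at `M0` is harmless because `λ·V_λ ≥ -M0`. Letting
  `λ → 0⁺` gives `w ≤ w₀`.
-/

noncomputable section
open Set Filter

/-- The Hessian matrix of `φ : ℝ^N → ℝ` at `x`. -/
def hessMat {N : ℕ} (φ : EuclideanSpace ℝ (Fin N) → ℝ) (x : EuclideanSpace ℝ (Fin N)) :
    Matrix (Fin N) (Fin N) ℝ :=
  fun i j => iteratedFDeriv ℝ 2 φ x ![EuclideanSpace.single i 1, EuclideanSpace.single j 1]

/-- Frobenius (Euclidean) norm of a real square matrix. -/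
def mfroSq {N : ℕ} (A : Matrix (Fin N) (Fin N) ℝ) : ℝ :=
  Real.sqrt (∑ i, ∑ j, (A i j) ^ 2)

/-- The block matrix inequality `-(3/ε)·diag(I,I) ≤ diag(A,B) ≤ (3/ε)·[[I,-I],[-I,I]]`
(in the positive semidefinite order on symmetric `2N × 2N` matrices). -/
def BlockIneq {N : ℕ} (ε : ℝ) (A B : Matrix (Fin N) (Fin N) ℝ) : Prop :=
  (Matrix.fromBlocks A 0 0 B
      + (3 / ε) • (1 : Matrix (Fin N ⊕ Fin N) (Fin N ⊕ Fin N) ℝ)).PosSemidef ∧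
  ((3 / ε) • Matrix.fromBlocks (1 : Matrix (Fin N) (Fin N) ℝ) (-1) (-1) 1
      - Matrix.fromBlocks A 0 0 B).PosSemidef

/-- `V` is a constrained viscosity solution of `λ V + H(x, DV, D²V) = 0` on `closure θ`:
it is continuous, a viscosity subsolution on `θ` and a viscosity supersolution on
`closure θ`. -/
def ConstrainedSol {N : ℕ} (θ : Set (EuclideanSpace ℝ (Fin N))) (lam : ℝ)
    (H : EuclideanSpace ℝ (Fin N) → EuclideanSpace ℝ (Fin N) →
      Matrix (Fin N) (Fin N) ℝ → ℝ)
    (V : EuclideanSpace ℝ (Fin N) → ℝ) : Prop :=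
  ContinuousOn V (closure θ) ∧
  (∀ x ∈ θ, ∀ φ : EuclideanSpace ℝ (Fin N) → ℝ, ContDiff ℝ 2 φ →
    IsLocalMaxOn (fun y => V y - φ y) θ x →
    lam * V x + H x (gradient φ x) (hessMat φ x) ≤ 0) ∧
  (∀ x ∈ closure θ, ∀ φ : EuclideanSpace ℝ (Fin N) → ℝ, ContDiff ℝ 2 φ →
    IsLocalMinOn (fun y => V y - φ y) (closure θ) x →
    0 ≤ lam * V x + H x (gradient φ x) (hessMat φ x))

/-- `hbar H M0 x p A = min { M0, sup_{l>0} H(x, l•p, l•A) }`.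
(Phrased as `⨆_{l>0} min M0 (H (x, l•p, l•A))`, which coincides with
`min { M0, sup_{l>0} H(x, l•p, l•A) }` computed in the extended reals, and is a genuine
real number even when `sup_{l>0} H(x, l•p, l•A) = +∞`.) -/
def hbar {N : ℕ}
    (H : EuclideanSpace ℝ (Fin N) → EuclideanSpace ℝ (Fin N) →
      Matrix (Fin N) (Fin N) ℝ → ℝ)
    (M0 : ℝ) (x p : EuclideanSpace ℝ (Fin N)) (A : Matrix (Fin N) (Fin N) ℝ) : ℝ :=
  ⨆ l : {l : ℝ // 0 < l}, min M0 (H x (l.1 • p) (l.1 • A))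

/-- `w` belongs to `Lip_{M0}(closure θ)` and satisfies `w + H̄(x, Dw, D²w) ≤ 0` on `θ`
in the viscosity sense, where `H̄(x,p,A) = min { M0, sup_{l>0} H(x, l•p, l•A) }`. -/
def SubSolFam {N : ℕ} (θ : Set (EuclideanSpace ℝ (Fin N)))
    (H : EuclideanSpace ℝ (Fin N) → EuclideanSpace ℝ (Fin N) →
      Matrix (Fin N) (Fin N) ℝ → ℝ)
    (M0 : ℝ) (w : EuclideanSpace ℝ (Fin N) → ℝ) : Prop :=
  (∀ z ∈ closure θ, |w z| ≤ M0) ∧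
  (∀ z ∈ closure θ, ∀ z' ∈ closure θ, |w z - w z'| ≤ M0 * ‖z - z'‖) ∧
  (∀ z ∈ θ, ∀ φ : EuclideanSpace ℝ (Fin N) → ℝ, ContDiff ℝ 2 φ →
    IsLocalMaxOn (fun y => w y - φ y) θ z →
    w z + hbar H M0 z (gradient φ z) (hessMat φ z) ≤ 0)

/-- `ℝ^N` with the Euclidean norm. -/
abbrev EE (N : ℕ) := EuclideanSpace ℝ (Fin N)

/-! ### The Hamiltonian does not depend on the Hessian -/

lemma exists_quadForm_bound {N : ℕ} (A : Matrix (Fin N) (Fin N) ℝ) :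
    ∃ t : ℝ, 0 < t ∧ ∀ v : Fin N → ℝ,
      |dotProduct v (A.mulVec v)| ≤ t * dotProduct v v := by
  refine ⟨(∑ i, ∑ j, |A i j|) + 1, by positivity, fun v => ?_⟩
  have hv : 0 ≤ dotProduct v v := by
    simp only [dotProduct]; exact Finset.sum_nonneg fun i _ => mul_self_nonneg _
  have hvi : ∀ i, v i ^ 2 ≤ dotProduct v v := fun i => by
    have := Finset.single_le_sum (f := fun i => v i * v i)
      (fun i _ => mul_self_nonneg _) (Finset.mem_univ i)
    simp only [dotProduct]
    nlinarith
  have key : |dotProduct v (A.mulVec v)| ≤ (∑ i, ∑ j, |A i j|) * dotProduct v v := by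
    simp only [dotProduct, Matrix.mulVec, Finset.mul_sum (Finset.univ : Finset (Fin N)) _ (v _)]
    refine (Finset.abs_sum_le_sum_abs _ _).trans ?_
    rw [Finset.sum_mul]
    refine Finset.sum_le_sum fun i _ => (Finset.abs_sum_le_sum_abs _ _).trans ?_
    rw [Finset.sum_mul]
    refine Finset.sum_le_sum fun j _ => ?_
    have h1 : |v i * (A i j * v j)| = |A i j| * (|v i| * |v j|) := by
      rw [abs_mul, abs_mul]; ring
    rw [h1]
    refine mul_le_mul_of_nonneg_left ?_ (abs_nonneg _)
    have := hvi i
    have := hvi j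
    simp only [dotProduct] at *
    nlinarith [sq_nonneg (|v i| - |v j|), sq_abs (v i), sq_abs (v j)]
  nlinarith

/-- With `3/ε = 2t` the two block inequalities read `3t·|u|² ≥ 0` and `t·|u - 2v|² ≥ 0`. -/
lemma blockIneq_scalar {N : ℕ} {t : ℝ} (ht : 0 < t) :
    BlockIneq (N := N) (3 / (2 * t)) (t • 1) (-(2 * t) • 1) := by
  have hk : 3 / (3 / (2 * t)) = 2 * t := by field_simp
  unfold BlockIneq
  rw [hk]
  constructor
  · have h := (Matrix.posSemidef_conjTranspose_mul_self
      (Matrix.fromBlocks (1 : Matrix (Fin N) (Fin N) ℝ) 0 0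
        (0 : Matrix (Fin N) (Fin N) ℝ))).smul (show (0 : ℝ) ≤ 3 * t by positivity)
    convert h using 1
    simp only [Matrix.fromBlocks_conjTranspose, Matrix.fromBlocks_multiply,
      ← Matrix.fromBlocks_one, Matrix.fromBlocks_smul, Matrix.fromBlocks_add]
    congr 1 <;> simp [← add_smul] <;> ring_nf
  · have h := (Matrix.posSemidef_conjTranspose_mul_self
      (Matrix.fromBlocks (1 : Matrix (Fin N) (Fin N) ℝ) ((-2 : ℝ) • 1) 0
        (0 : Matrix (Fin N) (Fin N) ℝ))).smul ht.le
    convert h using 1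
    simp only [Matrix.fromBlocks_conjTranspose, Matrix.fromBlocks_multiply,
      Matrix.fromBlocks_smul, sub_eq_add_neg, Matrix.fromBlocks_neg, Matrix.fromBlocks_add]
    congr 1 <;> simp <;> module

lemma blockIneq_zero {N : ℕ} : BlockIneq (N := N) 1 0 0 := by
  unfold BlockIneq
  rw [Matrix.fromBlocks_zero, zero_add, sub_zero]
  refine ⟨Matrix.PosSemidef.one.smul (by norm_num), ?_⟩
  have h := (Matrix.posSemidef_conjTranspose_mul_self
      (Matrix.fromBlocks (1 : Matrix (Fin N) (Fin N) ℝ) (-1) 0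
        (0 : Matrix (Fin N) (Fin N) ℝ)))
  refine Matrix.PosSemidef.smul ?_ (by norm_num)
  convert h using 1
  rw [Matrix.fromBlocks_conjTranspose, Matrix.fromBlocks_multiply]
  simp

/-- `H x p` takes the same value at `t·I` and at `-2t·I`, and is antitone, hence constant on
symmetric matrices. -/
lemma H_indep {N : ℕ} {θ : Set (EE N)}
    {H : EE N → EE N → Matrix (Fin N) (Fin N) ℝ → ℝ}
    (hAH1 : ∀ x ∈ closure θ, ∀ (p : EE N)
      (A B : Matrix (Fin N) (Fin N) ℝ), (A - B).PosSemidef → H x p A ≤ H x p B)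
    {ρ : ℝ → ℝ} (hρ00 : ρ 0 = 0)
    (hAH3 : ∀ ε : ℝ, 0 < ε → ∀ x ∈ closure θ, ∀ y ∈ closure θ,
      ∀ (p : EE N) (A B : Matrix (Fin N) (Fin N) ℝ),
      A.IsSymm → B.IsSymm → BlockIneq ε A B →
      |H y p B - H x p A| ≤ ρ (‖x - y‖ ^ 2 / ε + ‖x - y‖ * (‖p‖ + 1)))
    {x : EE N} (hx : x ∈ closure θ) (p : EE N) {A : Matrix (Fin N) (Fin N) ℝ}
    (hA : A.IsSymm) : H x p A = H x p 0 := by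
  obtain ⟨t, ht, hbd⟩ := exists_quadForm_bound A
  have hone : ∀ c : ℝ, (c • (1 : Matrix (Fin N) (Fin N) ℝ)).IsSymm := fun c => by
    simp [Matrix.IsSymm]
  have hone_psd : ∀ c : ℝ, 0 ≤ c → (c • (1 : Matrix (Fin N) (Fin N) ℝ)).PosSemidef :=
    fun c hc => Matrix.PosSemidef.one.smul hc
  have heq : H x p (-(2 * t) • 1) = H x p (t • 1) := by
    have h := hAH3 _ (by positivity) x hx x hx p _ _ (hone t) (hone _) (blockIneq_scalar ht)
    simp only [sub_self, norm_zero, zero_mul, add_zero] at h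
    rw [zero_pow two_ne_zero, zero_div, hρ00] at h
    exact sub_eq_zero.1 (abs_nonpos_iff.1 h)
  have sandwich : ∀ B : Matrix (Fin N) (Fin N) ℝ, (t • 1 - B).PosSemidef →
      (B - -(2 * t) • 1).PosSemidef → H x p B = H x p (t • 1) := fun B h1 h2 =>
    le_antisymm ((hAH1 x hx p _ _ h2).trans heq.le) (hAH1 x hx p _ _ h1)
  rw [sandwich A, sandwich 0]
  · simpa using hone_psd t ht.le
  · simpa using hone_psd (2 * t) (by positivity)
  · refine Matrix.PosSemidef.of_dotProduct_mulVec_nonneg ?_ fun v => ?_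
    · rw [Matrix.IsHermitian, Matrix.conjTranspose_eq_transpose_of_trivial]
      exact (hone t).sub hA
    · have := (abs_le.1 (hbd v)).2
      simp only [star_trivial, Matrix.sub_mulVec, Matrix.smul_mulVec, Matrix.one_mulVec,
        dotProduct_sub, dotProduct_smul, smul_eq_mul]
      linarith
  · refine Matrix.PosSemidef.of_dotProduct_mulVec_nonneg ?_ fun v => ?_
    · rw [Matrix.IsHermitian, Matrix.conjTranspose_eq_transpose_of_trivial]
      exact hA.sub (hone _)
    · have := (abs_le.1 (hbd v)).1
      have hv : 0 ≤ dotProduct v v := by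
        simp only [dotProduct]; exact Finset.sum_nonneg fun i _ => mul_self_nonneg _
      simp only [star_trivial, Matrix.sub_mulVec, Matrix.smul_mulVec, Matrix.one_mulVec,
        dotProduct_sub, dotProduct_smul, smul_eq_mul]
      nlinarith

/-! ### Derivatives of test functions -/

lemma hessMat_isSymm {N : ℕ} {φ : EE N → ℝ} (hφ : ContDiff ℝ 2 φ) (x : EE N) :
    (hessMat φ x).IsSymm := by
  have h : IsSymmSndFDerivAt ℝ φ x := hφ.contDiffAt.isSymmSndFDerivAt (by simp)
  ext i j
  simp only [Matrix.transpose_apply, hessMat, iteratedFDeriv_two_apply]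
  exact h.eq _ _

lemma hasGradientAt_sqDist {N : ℕ} (c : ℝ) (b x : EE N) :
    HasGradientAt (fun y : EE N => ‖c • y - b‖ ^ 2) ((2 * c) • (c • x - b)) x := by
  rw [hasGradientAt_iff_hasFDerivAt]
  have h1 : HasFDerivAt (fun y : EE N => c • y - b) (c • ContinuousLinearMap.id ℝ (EE N)) x :=
    ((hasFDerivAt_id x).const_smul c).sub_const b
  refine h1.norm_sq.congr_fderiv ?_
  ext v
  simp
  ring

lemma HasGradientAt.add' {N : ℕ} {f g : EE N → ℝ} {f' g' x : EE N}
    (hf : HasGradientAt f f' x) (hg : HasGradientAt g g' x) :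
    HasGradientAt (fun y => f y + g y) (f' + g') x := by
  rw [hasGradientAt_iff_hasFDerivAt] at *
  rw [map_add]; exact hf.add hg

lemma HasGradientAt.mul' {N : ℕ} {f : EE N → ℝ} {f' x : EE N} (c : ℝ)
    (hf : HasGradientAt f f' x) :
    HasGradientAt (fun y => c * f y) (c • f') x := by
  rw [hasGradientAt_iff_hasFDerivAt] at *
  simpa using hf.const_mul c

/-! ### Comparison with the constrained supersolution -/

set_option maxHeartbeats 1000000 in
/-- Comparison between a subsolution of `w + min(M0, h(x, K·Dw)) = 0` in `θ` and a supersolution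
of `W + h(x, K·DW) = 0` on `closure θ`, both Lipschitz, the latter bounded below by `-M0`. -/
lemma comparison {N : ℕ} {θ : Set (EE N)}
    (hθne : θ.Nonempty) (hθbdd : Bornology.IsBounded θ)
    {m : EE N → EE N} {r : ℝ} (hr : 0 < r)
    (hm_bd : ∀ x ∈ closure θ, ‖m x‖ ≤ 1)
    (hm_uc : UniformContinuousOn m (closure θ))
    (hm_ball : ∀ x ∈ closure θ, ∀ s ∈ Ioc (0 : ℝ) r,
      Metric.ball (x + s • m x) (r * s) ⊆ θ)
    {h : EE N → EE N → ℝ} {ρ : ℝ → ℝ}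
    (hρ_mono : MonotoneOn ρ (Ici 0))
    (hρ0 : Tendsto ρ (nhdsWithin 0 (Ioi 0)) (nhds 0))
    (hp : ∀ x ∈ closure θ, ∀ p q : EE N, |h x p - h x q| ≤ ρ ‖p - q‖)
    (hx : ∀ x ∈ closure θ, ∀ y ∈ closure θ, ∀ p : EE N,
      |h y p - h x p| ≤ ρ (‖x - y‖ ^ 2 + ‖x - y‖ * (‖p‖ + 1)))
    {M0 : ℝ} (hM0 : 0 < M0) {K : ℝ} (hK : 0 < K) {w W : EE N → ℝ}
    (hw : ∀ z ∈ closure θ, ∀ z' ∈ closure θ, |w z - w z'| ≤ M0 * ‖z - z'‖)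
    (hW : ∀ z ∈ closure θ, ∀ z' ∈ closure θ, |W z - W z'| ≤ M0 * ‖z - z'‖)
    (hWbd : ∀ z ∈ closure θ, -M0 ≤ W z)
    (hsub : ∀ z ∈ θ, ∀ φ : EE N → ℝ, ContDiff ℝ 2 φ →
      IsLocalMaxOn (fun y => w y - φ y) θ z →
      w z + min M0 (h z (K • gradient φ z)) ≤ 0)
    (hsup : ∀ z ∈ closure θ, ∀ φ : EE N → ℝ, ContDiff ℝ 2 φ →
      IsLocalMinOn (fun y => W y - φ y) (closure θ) z →
      0 ≤ W z + h z (K • gradient φ z)) :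
    ∀ x ∈ closure θ, w x ≤ W x := by
  have hcpt : IsCompact (closure θ) := hθbdd.isCompact_closure
  have lipcont : ∀ f : EE N → ℝ,
      (∀ z ∈ closure θ, ∀ z' ∈ closure θ, |f z - f z'| ≤ M0 * ‖z - z'‖) →
      ContinuousOn f (closure θ) := fun f hf => by
    refine (LipschitzOnWith.of_dist_le_mul (K := ⟨M0, hM0.le⟩) fun a ha b hb => ?_).continuousOn
    rw [Real.dist_eq, dist_eq_norm]; exact hf a ha b hb
  have hwc := lipcont w hw
  have hWc := lipcont W hW
  obtain ⟨z, hz, hzmax⟩ := hcpt.exists_isMaxOn hθne.closure (hwc.sub hWc)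
  have hzmax' : ∀ y ∈ closure θ, w y - W y ≤ w z - W z := fun y hy => hzmax hy
  by_contra! hcon
  obtain ⟨x0, hx0, hlt⟩ := hcon
  set σ := w z - W z with hσ
  have hσpos : 0 < σ := by linarith [hzmax' x0 hx0]
  -- Smallness of the modulus near zero, with the value at zero included by monotonicity.
  obtain ⟨δ, hδ, hρδ⟩ : ∃ δ > 0, ∀ t, 0 ≤ t → t < δ → ρ t < σ / 4 := by
    have h1 := (hρ0.eventually (gt_mem_nhds (show (0:ℝ) < σ / 4 by positivity)))
    rw [eventually_nhdsWithin_iff, Metric.eventually_nhds_iff] at h1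
    obtain ⟨δ, hδ, h1⟩ := h1
    have h2 : ρ (δ / 2) < σ / 4 := h1 (by simp [abs_of_pos hδ]; linarith)
      (by simp only [mem_Ioi]; positivity)
    refine ⟨δ / 2, by positivity, fun t ht0 ht => lt_of_le_of_lt ?_ h2⟩
    exact hρ_mono (mem_Ici.2 ht0) (mem_Ici.2 (by positivity)) ht.le
  obtain ⟨δ', hδ', hmδ⟩ := Metric.uniformContinuousOn_iff.1 hm_uc (r / 2) (by positivity)
  set C : ℝ := M0 * (M0 + 4) with hC
  have hCpos : 0 < C := by positivity
  -- Penalisation parameter `ε = η² / C`, so that `(x-y)/ε - m z` and `y - z` are at most `η`; all error terms vanish as `η → 0⁺`.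
  have small : ∀ (f : ℝ → ℝ), Continuous f → f 0 = 0 → ∀ c : ℝ, 0 < c →
      ∀ᶠ η in nhdsWithin (0:ℝ) (Ioi 0), f η < c := fun f hf h0 c hc =>
    ((hf.tendsto' 0 0 h0).mono_left nhdsWithin_le_nhds).eventually (gt_mem_nhds hc)
  obtain ⟨η, hη1, hη2, hη3, hηr, hηε, hη4, hη5, hη6⟩ :=
    ((small (fun η => η) (by fun_prop) rfl δ' hδ').and <|
      (small (fun η => η) (by fun_prop) rfl (r / 2) (by positivity)).and <|
      (small (fun η => η ^ 2 / C) (by fun_prop) (by simp) 1 one_pos).and <|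
      (small (fun η => η ^ 2 / C) (by fun_prop) (by simp) r hr).and <|
      (small (fun η => M0 * (η ^ 2 / C)) (by fun_prop) (by simp) (σ / 2) (by positivity)).and <|
      (small (fun η => K * (2 * η)) (by fun_prop) (by simp) δ hδ).and <|
      (small (fun η => (η ^ 2 / C * (M0 + 3)) ^ 2 + (M0 + 3) * (2 * K * η + η ^ 2 / C))
        (by fun_prop) (by simp) δ hδ).and self_mem_nhdsWithin).exists
  have hη : 0 < η := hη6
  set ε : ℝ := η ^ 2 / C with hεdef
  have hε : 0 < ε := by positivity
  have hCε : C * ε = η ^ 2 := by rw [hεdef]; field_simp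
  -- Soner's shifted penalisation, pushing the maximum point `x` of the subsolution into `θ`.
  let Φ : EE N × EE N → ℝ := fun q =>
    w q.1 - W q.2 - ‖ε⁻¹ • (q.1 - q.2) - m z‖ ^ 2 - ‖q.2 - z‖ ^ 2
  have hΦc : ContinuousOn Φ (closure θ ×ˢ closure θ) := by
    have a1 : ContinuousOn (fun q : EE N × EE N => w q.1) (closure θ ×ˢ closure θ) :=
      hwc.comp continuousOn_fst fun q hq => hq.1
    have a2 : ContinuousOn (fun q : EE N × EE N => W q.2) (closure θ ×ˢ closure θ) :=
      hWc.comp continuousOn_snd fun q hq => hq.2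
    have a3 : Continuous (fun q : EE N × EE N => ‖ε⁻¹ • (q.1 - q.2) - m z‖ ^ 2) := by fun_prop
    have a4 : Continuous (fun q : EE N × EE N => ‖q.2 - z‖ ^ 2) := by fun_prop
    exact ((a1.sub a2).sub a3.continuousOn).sub a4.continuousOn
  obtain ⟨⟨x, y⟩, ⟨hxc, hyc⟩, hmax⟩ := (hcpt.prod hcpt).exists_isMaxOn
    (hθne.closure.prod hθne.closure) hΦc
  simp only at hxc hyc
  have hmax' : ∀ a ∈ closure θ, ∀ b ∈ closure θ, Φ (a, b) ≤ Φ (x, y) :=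
    fun a ha b hb => hmax (show (a, b) ∈ closure θ ×ˢ closure θ from ⟨ha, hb⟩)
  have hzs : z + ε • m z ∈ closure θ := subset_closure <|
    hm_ball z hz ε ⟨hε, hηr.le⟩ (Metric.mem_ball_self (by positivity))
  set a : ℝ := ‖ε⁻¹ • (x - y) - m z‖ with ha
  have ha0 : 0 ≤ a := norm_nonneg _
  have hcmp : σ - M0 * ε ≤ w x - W y - a ^ 2 - ‖y - z‖ ^ 2 := by
    have h1 := hmax' _ hzs z hz
    have h2 := hw _ hzs z hz
    have h3 : ‖z + ε • m z - z‖ ≤ ε := by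
      rw [add_sub_cancel_left, norm_smul, Real.norm_eq_abs, abs_of_pos hε]
      have := hm_bd z hz
      nlinarith
    have h4 : ε⁻¹ • (z + ε • m z - z) - m z = 0 := by
      rw [add_sub_cancel_left, smul_smul, inv_mul_cancel₀ hε.ne', one_smul, sub_self]
    simp only [Φ, h4, sub_self, norm_zero] at h1
    have h5 := (abs_le.1 h2).1
    have h6 := mul_le_mul_of_nonneg_left h3 hM0.le
    norm_num at h1
    linarith
  have hxy : ‖x - y‖ ≤ ε * (a + 1) := by
    have h1 : x - y = ε • ((ε⁻¹ • (x - y) - m z) + m z) := by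
      rw [sub_add_cancel, smul_smul, mul_inv_cancel₀ hε.ne', one_smul]
    calc ‖x - y‖ = ε * ‖(ε⁻¹ • (x - y) - m z) + m z‖ := by
          conv_lhs => rw [h1]
          rw [norm_smul, Real.norm_eq_abs, abs_of_pos hε]
      _ ≤ ε * (a + 1) := by
          gcongr
          exact (norm_add_le _ _).trans (add_le_add le_rfl (hm_bd z hz))
  have hest : a ^ 2 + ‖y - z‖ ^ 2 ≤ M0 * ε * (a + 2) := by
    have h1 := (abs_le.1 (hw x hxc y hyc)).2
    have h2 := hzmax' y hyc
    have h3 := mul_le_mul_of_nonneg_left hxy hM0.le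
    nlinarith
  -- For `a > M0 + 2` the estimate fails, since then `a² > M0·(a + 2)`.
  have ha_bd : a ≤ M0 + 2 := by
    by_contra! hc
    have h1 : M0 * ε * (a + 2) ≤ M0 * (a + 2) := by
      have : 0 ≤ M0 * (a + 2) := by positivity
      nlinarith
    nlinarith [sq_nonneg ‖y - z‖]
  have hest2 : a ^ 2 + ‖y - z‖ ^ 2 ≤ η ^ 2 := by
    rw [← hCε, hC]
    have : M0 * ε * (a + 2) ≤ M0 * ε * (M0 + 4) :=
      mul_le_mul_of_nonneg_left (by linarith) (by positivity)
    linarith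
  have haη : a ≤ η := abs_le_of_sq_le_sq' (by nlinarith [sq_nonneg ‖y - z‖]) hη.le |>.2
  have hyη : ‖y - z‖ ≤ η := abs_le_of_sq_le_sq' (by nlinarith [sq_nonneg a]) hη.le |>.2
  have hxy2 : ‖x - y‖ ≤ ε * (M0 + 3) := hxy.trans
    (mul_le_mul_of_nonneg_left (by linarith) hε.le)
  have hxθ : x ∈ θ := by
    refine hm_ball y hyc ε ⟨hε, hηr.le⟩ ?_
    have h1 : ‖m y - m z‖ < r / 2 := by
      rw [← dist_eq_norm]
      exact hmδ y hyc z hz (by rw [dist_eq_norm]; linarith)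
    have h2 : x - (y + ε • m y) = ε • ((ε⁻¹ • (x - y) - m z) - (m y - m z)) := by
      rw [sub_sub_sub_cancel_right, smul_sub, smul_smul, mul_inv_cancel₀ hε.ne', one_smul]
      abel
    rw [Metric.mem_ball, dist_eq_norm, h2, norm_smul, Real.norm_eq_abs, abs_of_pos hε, mul_comm]
    refine mul_lt_mul_of_pos_right ?_ hε
    have := norm_sub_le (ε⁻¹ • (x - y) - m z) (m y - m z)
    linarith
  set p : EE N := (2 * ε⁻¹) • (ε⁻¹ • (x - y) - m z) with hpdef
  have hpn : ‖p‖ = 2 * ε⁻¹ * a := by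
    rw [hpdef, norm_smul, Real.norm_eq_abs, abs_of_pos (by positivity)]
  -- Subsolution inequality at `x`.
  have hS : w x + min M0 (h x (K • p)) ≤ 0 := by
    let φ : EE N → ℝ := fun q => ‖ε⁻¹ • q - (ε⁻¹ • y + m z)‖ ^ 2
    have e1 : ∀ q : EE N, ε⁻¹ • q - (ε⁻¹ • y + m z) = ε⁻¹ • (q - y) - m z := fun q => by
      rw [smul_sub]; abel
    have hg : gradient φ x = p := by
      have := (hasGradientAt_sqDist ε⁻¹ (ε⁻¹ • y + m z) x).gradient
      rw [e1] at this
      exact this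
    rw [← hg]
    refine hsub x hxθ φ ?_ ?_
    · exact ((contDiff_id.const_smul ε⁻¹).sub contDiff_const).norm_sq ℝ
    · have : IsMaxOn (fun q => w q - φ q) θ x := fun q hq => by
        have := hmax' q (subset_closure hq) y hyc
        simp only [Φ, φ, e1, mem_ofPred_eq] at *
        linarith
      exact this.localize
  -- Supersolution inequality at `y`.
  have hP : 0 ≤ W y + h y (K • (p - (2:ℝ) • (y - z))) := by
    let φ : EE N → ℝ := fun q =>
      (-1) * (‖ε⁻¹ • q - (ε⁻¹ • x - m z)‖ ^ 2 + ‖(1:ℝ) • q - z‖ ^ 2)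
    have e1 : ∀ q : EE N, ‖ε⁻¹ • q - (ε⁻¹ • x - m z)‖ = ‖ε⁻¹ • (x - q) - m z‖ := fun q => by
      rw [← norm_neg, smul_sub]; congr 1; abel
    have hg : gradient φ y = p - (2:ℝ) • (y - z) := by
      have := (((hasGradientAt_sqDist ε⁻¹ (ε⁻¹ • x - m z) y).add'
        (hasGradientAt_sqDist 1 z y)).mul' (-1)).gradient
      refine this.trans ?_
      rw [hpdef]
      module
    rw [← hg]
    refine hsup y hyc φ ?_ ?_
    · exact contDiff_const.mul
        ((((contDiff_id.const_smul ε⁻¹).sub contDiff_const).norm_sq ℝ).add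
        (((contDiff_id.const_smul (1:ℝ)).sub contDiff_const).norm_sq ℝ))
    · have : IsMinOn (fun q => W q - φ q) (closure θ) y := fun q hq => by
        have := hmax' x hxc q hq
        simp only [Φ, φ, e1, mem_ofPred_eq, one_smul] at *
        linarith
      exact this.localize
  have hgap : σ / 2 < w x - W y := by
    linarith [sq_nonneg a, sq_nonneg ‖y - z‖]
  -- The truncation at `M0` is inactive, as `w x > W y ≥ -M0`.
  have hS' : w x + h x (K • p) ≤ 0 := by
    rcases min_choice M0 (h x (K • p)) with hc | hc
    · rw [hc] at hS
      linarith [hWbd y hyc]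
    · rwa [hc] at hS
  have hE1 : h y (K • (p - (2:ℝ) • (y - z))) - h y (K • p) < σ / 4 := by
    refine lt_of_le_of_lt ((le_abs_self _).trans (hp y hyc _ _)) (hρδ _ (norm_nonneg _) ?_)
    have : K • (p - (2:ℝ) • (y - z)) - K • p = -(K • (2:ℝ) • (y - z)) := by module
    rw [this, norm_neg, norm_smul, norm_smul, Real.norm_eq_abs, abs_of_pos hK]
    norm_num
    refine lt_of_le_of_lt ?_ hη4
    gcongr
  have hE2 : h y (K • p) - h x (K • p) < σ / 4 := by
    refine lt_of_le_of_lt ((le_abs_self _).trans (hx x hxc y hyc _)) (hρδ _ (by positivity) ?_)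
    refine lt_of_le_of_lt ?_ hη5
    rw [norm_smul, hpn, Real.norm_eq_abs, abs_of_pos hK]
    have h1 : ‖x - y‖ * (K * (2 * ε⁻¹ * a) + 1) ≤ (M0 + 3) * (2 * K * η + ε) := by
      calc _ ≤ (ε * (M0 + 3)) * (K * (2 * ε⁻¹ * η) + 1) := by gcongr
        _ = _ := by field_simp
    have h2 : ‖x - y‖ ^ 2 ≤ (ε * (M0 + 3)) ^ 2 := by gcongr
    linarith
  linarith

/-! ### Stability of subsolutions as `λ → 0⁺` -/

set_option maxHeartbeats 1000000 in
/-- The limit of the functions `W lam = lam · V lam` satisfies `w0 + h(x, l·Dw0) ≤ 0` for every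
`l > 0`. -/
lemma limit_subsolution {N : ℕ} {θ : Set (EE N)} (hθopen : IsOpen θ)
    {h : EE N → EE N → ℝ}
    (hhc : ContinuousOn (fun q : EE N × EE N => h q.1 q.2) (closure θ ×ˢ univ))
    (hrad : ∀ l : ℝ, 1 ≤ l → ∀ x ∈ closure θ, ∀ p : EE N, h x p ≤ h x (l • p))
    {M0 : ℝ} {W : ℝ → EE N → ℝ} {w0 : EE N → ℝ}
    (hWc : ∀ lam : ℝ, 0 < lam → ContinuousOn (W lam) (closure θ))
    (hWlip : ∀ lam : ℝ, 0 < lam → ∀ x ∈ closure θ, ∀ y ∈ closure θ,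
      |W lam x - W lam y| ≤ M0 * ‖x - y‖)
    (hsub : ∀ lam : ℝ, 0 < lam → ∀ z ∈ θ, ∀ φ : EE N → ℝ, ContDiff ℝ 2 φ →
      IsLocalMaxOn (fun y => W lam y - φ y) θ z →
      W lam z + h z (lam⁻¹ • gradient φ z) ≤ 0)
    (hw0 : ∀ x ∈ closure θ, Tendsto (fun lam : ℝ => W lam x)
      (nhdsWithin 0 (Ioi 0)) (nhds (w0 x)))
    {z : EE N} (hz : z ∈ θ) {φ : EE N → ℝ} (hφ : ContDiff ℝ 2 φ)
    (hmax : IsLocalMaxOn (fun y => w0 y - φ y) θ z) {l : ℝ} (hl : 0 < l) :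
    w0 z + h z (l • gradient φ z) ≤ 0 := by
  -- Adding `|y - z|²` makes `z` a strict maximum point without changing the gradient there.
  let ψ : EE N → ℝ := fun y => φ y + ‖(1:ℝ) • y - z‖ ^ 2
  have hψ : ContDiff ℝ 2 ψ :=
    hφ.add (((contDiff_id.const_smul (1:ℝ)).sub contDiff_const).norm_sq ℝ)
  have hψgrad : gradient ψ z = gradient φ z := by
    have h1 := (hφ.differentiable (by norm_num) z).hasGradientAt.add'
      (hasGradientAt_sqDist 1 z z)
    refine h1.gradient.trans ?_
    simp
  have hgc : Continuous (gradient ψ) :=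
    (InnerProductSpace.toDual ℝ (EE N)).symm.continuous.comp (hψ.continuous_fderiv (by norm_num))
  have hmax2 : ∀ᶠ y in nhds z, w0 y - φ y ≤ w0 z - φ z := by
    have := hmax
    rwa [IsLocalMaxOn, IsMaxFilter, hθopen.nhdsWithin_eq hz] at this
  obtain ⟨R, hR, hball⟩ := Metric.nhds_basis_closedBall.mem_iff.1
    (Filter.inter_mem hmax2 (hθopen.mem_nhds hz))
  set B := Metric.closedBall z R with hB
  have hBθ : B ⊆ θ := fun y hy => (hball hy).2
  have hBc : B ⊆ closure θ := hBθ.trans subset_closure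
  have hBmax : ∀ y ∈ B, w0 y - φ y ≤ w0 z - φ z := fun y hy => (hball hy).1
  have hBcpt : IsCompact B := isCompact_closedBall z R
  have hzB : z ∈ B := Metric.mem_closedBall_self hR.le
  let lam : ℕ → ℝ := fun n => 1 / ((n : ℝ) + 1)
  have hlam : ∀ n, 0 < lam n := fun n => by positivity
  have hlam0 : Tendsto lam atTop (nhdsWithin 0 (Ioi 0)) :=
    tendsto_nhdsWithin_iff.2 ⟨tendsto_one_div_add_atTop_nhds_zero_nat, .of_forall hlam⟩
  have hex : ∀ n, ∃ x ∈ B, ∀ y ∈ B, W (lam n) y - ψ y ≤ W (lam n) x - ψ x := fun n => by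
    obtain ⟨x, hx, hxm⟩ := hBcpt.exists_isMaxOn ⟨z, hzB⟩
      (((hWc _ (hlam n)).mono hBc).sub hψ.continuous.continuousOn)
    exact ⟨x, hx, fun y hy => hxm hy⟩
  choose x hxB hxmax using hex
  obtain ⟨xb, hxb, s, hs, hlim⟩ := hBcpt.tendsto_subseq hxB
  have hls : Tendsto (fun n => lam (s n)) atTop (nhdsWithin 0 (Ioi 0)) :=
    hlam0.comp hs.tendsto_atTop
  -- Equi-Lipschitz continuity upgrades pointwise convergence along moving points.
  have hWx : Tendsto (fun n => W (lam (s n)) (x (s n))) atTop (nhds (w0 xb)) := by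
    have h1 : Tendsto (fun n => W (lam (s n)) xb) atTop (nhds (w0 xb)) :=
      (hw0 xb (hBc hxb)).comp hls
    have h2 : Tendsto (fun n => W (lam (s n)) (x (s n)) - W (lam (s n)) xb) atTop (nhds 0) := by
      have h3 : Tendsto (fun n => M0 * ‖x (s n) - xb‖) atTop (nhds 0) := by
        simpa using (tendsto_iff_norm_sub_tendsto_zero.1 hlim).const_mul M0
      exact squeeze_zero_norm (fun n => hWlip _ (hlam _) _ (hBc (hxB _)) _ (hBc hxb)) h3
    simpa using h2.add h1
  have hxbz : xb = z := by
    have h1 : w0 z - ψ z ≤ w0 xb - ψ xb := by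
      refine le_of_tendsto_of_tendsto' (((hw0 z (hBc hzB)).comp hls).sub_const (ψ z))
        (hWx.sub ((hψ.continuous.tendsto xb).comp hlim)) fun n => hxmax _ z hzB
    have h2 := hBmax xb hxb
    simp only [ψ, one_smul, sub_self, norm_zero] at h1
    have h3 : ‖xb - z‖ ^ 2 ≤ 0 := by norm_num at h1; linarith
    have h4 : ‖xb - z‖ = 0 := by
      have := norm_nonneg (xb - z)
      nlinarith
    exact sub_eq_zero.1 (norm_eq_zero.1 h4)
  subst hxbz
  have hev : ∀ᶠ n in atTop, W (lam (s n)) (x (s n)) +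
      h (x (s n)) (l • gradient ψ (x (s n))) ≤ 0 := by
    have e1 : ∀ᶠ n in atTop, x (s n) ∈ Metric.ball xb R :=
      hlim.eventually (Metric.ball_mem_nhds _ hR)
    have e2 : ∀ᶠ n in atTop, lam (s n) < 1 / l :=
      (hls.mono_right nhdsWithin_le_nhds).eventually (gt_mem_nhds (by positivity))
    filter_upwards [e1, e2] with n hn1 hn2
    have hloc : IsLocalMaxOn (fun y => W (lam (s n)) y - ψ y) θ (x (s n)) := by
      refine Filter.Eventually.filter_mono nhdsWithin_le_nhds ?_
      filter_upwards [Metric.isOpen_ball.mem_nhds hn1] with y hy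
      exact hxmax _ y (Metric.ball_subset_closedBall hy)
    have h1 := hsub _ (hlam _) _ (hBθ (hxB _)) ψ hψ hloc
    have hL := hlam (s n)
    have h2 := hrad ((lam (s n))⁻¹ / l) (by
      rw [le_div_iff₀ hl, one_mul, le_inv_comm₀ hl hL, ← one_div]; exact hn2.le)
      _ (hBc (hxB (s n))) (l • gradient ψ (x (s n)))
    rw [smul_smul, div_mul_cancel₀ _ hl.ne'] at h2
    linarith
  have hlimh : Tendsto (fun n => h (x (s n)) (l • gradient ψ (x (s n)))) atTop
      (nhds (h xb (l • gradient ψ xb))) := by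
    have h1 := hhc (xb, l • gradient ψ xb) ⟨hBc hxb, mem_univ _⟩
    have h2 : Tendsto (fun n => (x (s n), l • gradient ψ (x (s n)))) atTop
        (nhds (xb, l • gradient ψ xb)) :=
      hlim.prodMk_nhds (((hgc.tendsto xb).comp hlim).const_smul l)
    have h3 : ∀ n, (x (s n), l • gradient ψ (x (s n))) ∈ closure θ ×ˢ (univ : Set (EE N)) :=
      fun n => mk_mem_prod (hBc (hxB (s n))) (mem_univ _)
    have h4 := tendsto_nhdsWithin_iff.2 ⟨h2, Filter.Eventually.of_forall h3⟩
    exact Filter.Tendsto.comp h1 h4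
  rw [← hψgrad]
  exact le_of_tendsto (hWx.add hlimh) hev

/-! ### The maximal subsolution -/

/- STATEMENT 7: under (A_θ), (A_H) and radial monotonicity, the limit
`w₀ = lim_{λ→0⁺} λ·V_λ` is the maximal viscosity subsolution of
`W + H̄(x, DW, D²W) = 0` on `θ`: `w₀` itself belongs to the family of `Lip_{M0}`
viscosity subsolutions, and for every `x ∈ closure θ`,
`w₀(x) = sup { w(x) : w ∈ Lip_{M0}(closure θ), w + H̄(x,Dw,D²w) ≤ 0 on θ }`. -/
theorem limit_is_maximal_subsolution {N : ℕ} (θ : Set (EuclideanSpace ℝ (Fin N)))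
    (hθne : θ.Nonempty) (hθopen : IsOpen θ) (hθbdd : Bornology.IsBounded θ)
    (H : EuclideanSpace ℝ (Fin N) → EuclideanSpace ℝ (Fin N) →
      Matrix (Fin N) (Fin N) ℝ → ℝ)
    (m : EuclideanSpace ℝ (Fin N) → EuclideanSpace ℝ (Fin N)) (r : ℝ) (hr : 0 < r)
    (hm_bd : ∀ x ∈ closure θ, ‖m x‖ ≤ 1)
    (hm_uc : UniformContinuousOn m (closure θ))
    (hm_ball : ∀ x ∈ closure θ, ∀ s ∈ Ioc (0 : ℝ) r,
      Metric.ball (x + s • m x) (r * s) ⊆ θ)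
    (hH_uc : UniformContinuousOn
      (fun q : EuclideanSpace ℝ (Fin N) × EuclideanSpace ℝ (Fin N) ×
        Matrix (Fin N) (Fin N) ℝ => H q.1 q.2.1 q.2.2)
      (closure θ ×ˢ (univ : Set (EuclideanSpace ℝ (Fin N))) ×ˢ
        (univ : Set (Matrix (Fin N) (Fin N) ℝ))))
    (hAH1 : ∀ x ∈ closure θ, ∀ (p : EuclideanSpace ℝ (Fin N))
      (A B : Matrix (Fin N) (Fin N) ℝ), (A - B).PosSemidef → H x p A ≤ H x p B)
    (ρ : ℝ → ℝ) (hρ_nonneg : ∀ s : ℝ, 0 ≤ s → 0 ≤ ρ s)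
    (hρ_mono : MonotoneOn ρ (Ici 0))
    (hρ0 : Tendsto ρ (nhdsWithin 0 (Ioi 0)) (nhds 0))
    (hAH2 : ∀ x ∈ closure θ, ∀ (p q : EuclideanSpace ℝ (Fin N))
      (A B : Matrix (Fin N) (Fin N) ℝ),
      |H x p A - H x q B| ≤ ρ (‖p - q‖ + mfroSq (A - B)))
    (hAH3 : ∀ ε : ℝ, 0 < ε → ∀ x ∈ closure θ, ∀ y ∈ closure θ,
      ∀ (p : EuclideanSpace ℝ (Fin N)) (A B : Matrix (Fin N) (Fin N) ℝ),
      A.IsSymm → B.IsSymm → BlockIneq ε A B →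
      |H y p B - H x p A| ≤ ρ (‖x - y‖ ^ 2 / ε + ‖x - y‖ * (‖p‖ + 1)))
    (hrad : ∀ l : ℝ, 1 ≤ l → ∀ x ∈ closure θ, ∀ (p : EuclideanSpace ℝ (Fin N))
      (A : Matrix (Fin N) (Fin N) ℝ), A.IsSymm → H x p A ≤ H x (l • p) (l • A))
    (M0 : ℝ) (hM0 : 0 < M0)
    (V : ℝ → EuclideanSpace ℝ (Fin N) → ℝ)
    (hVsol : ∀ lam : ℝ, 0 < lam → ConstrainedSol θ lam H (V lam))
    (hVbd : ∀ lam : ℝ, 0 < lam → ∀ x ∈ closure θ, |lam * V lam x| ≤ M0)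
    (hVlip : ∀ lam : ℝ, 0 < lam → ∀ x ∈ closure θ, ∀ y ∈ closure θ,
      |lam * V lam x - lam * V lam y| ≤ M0 * ‖x - y‖)
    (w0 : EuclideanSpace ℝ (Fin N) → ℝ)
    (hw0 : ∀ x ∈ closure θ, Tendsto (fun lam : ℝ => lam * V lam x)
      (nhdsWithin 0 (Ioi 0)) (nhds (w0 x))) :
    SubSolFam θ H M0 w0 ∧
    ∀ x ∈ closure θ,
      w0 x = sSup {y : ℝ | ∃ w : EuclideanSpace ℝ (Fin N) → ℝ,
        SubSolFam θ H M0 w ∧ y = w x} := by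
  have hρ00 : ρ 0 = 0 := by
    refine le_antisymm (ge_of_tendsto hρ0 ?_) (hρ_nonneg 0 le_rfl)
    filter_upwards [self_mem_nhdsWithin] with t ht
    exact hρ_mono (mem_Ici.2 le_rfl) (mem_Ici.2 (le_of_lt ht)) (le_of_lt ht)
  have hind : ∀ x ∈ closure θ, ∀ (p : EE N) (A : Matrix (Fin N) (Fin N) ℝ), A.IsSymm →
      H x p A = H x p 0 := fun x hx p A hA => H_indep hAH1 hρ00 hAH3 hx p hA
  have hsmulsymm : ∀ (l : ℝ) (A : Matrix (Fin N) (Fin N) ℝ), A.IsSymm → (l • A).IsSymm :=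
    fun l A hA => hA.smul l
  have hgrad : ∀ (c : ℝ) (φ : EE N → ℝ), ContDiff ℝ 2 φ → ∀ x,
      gradient (fun y => c * φ y) x = c • gradient φ x := fun c φ hφ x =>
    ((hφ.differentiable (by norm_num) x).hasGradientAt.mul' c).gradient
  have hsubV : ∀ lam : ℝ, 0 < lam → ∀ z ∈ θ, ∀ φ : EE N → ℝ, ContDiff ℝ 2 φ →
      IsLocalMaxOn (fun y => lam * V lam y - φ y) θ z →
      lam * V lam z + H z (lam⁻¹ • gradient φ z) 0 ≤ 0 := fun lam hl z hz φ hφ hmax => by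
    have hφ' : ContDiff ℝ 2 (fun y => lam⁻¹ * φ y) := contDiff_const.mul hφ
    have h1 := (hVsol lam hl).2.1 z hz _ hφ' (by
      filter_upwards [hmax] with y hy
      have := mul_le_mul_of_nonneg_left hy (inv_pos.2 hl).le
      simpa only [mul_sub, inv_mul_cancel_left₀ hl.ne'] using this)
    rwa [hgrad _ _ hφ, hind z (subset_closure hz) _ _ (hessMat_isSymm hφ' z)] at h1
  have hsupV : ∀ lam : ℝ, 0 < lam → ∀ z ∈ closure θ, ∀ φ : EE N → ℝ, ContDiff ℝ 2 φ →
      IsLocalMinOn (fun y => lam * V lam y - φ y) (closure θ) z →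
      0 ≤ lam * V lam z + H z (lam⁻¹ • gradient φ z) 0 := fun lam hl z hz φ hφ hmin => by
    have hφ' : ContDiff ℝ 2 (fun y => lam⁻¹ * φ y) := contDiff_const.mul hφ
    have h1 := (hVsol lam hl).2.2 z hz _ hφ' (by
      filter_upwards [hmin] with y hy
      have := mul_le_mul_of_nonneg_left hy (inv_pos.2 hl).le
      simpa only [mul_sub, inv_mul_cancel_left₀ hl.ne'] using this)
    rwa [hgrad _ _ hφ, hind z hz _ _ (hessMat_isSymm hφ' z)] at h1
  have hw0sub : SubSolFam θ H M0 w0 := by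
    refine ⟨fun z hz => ?_, fun z hz z' hz' => ?_, fun z hz φ hφ hmax => ?_⟩
    · refine le_of_tendsto (hw0 z hz).abs ?_
      filter_upwards [self_mem_nhdsWithin] with lam hl using hVbd lam hl z hz
    · refine le_of_tendsto ((hw0 z hz).sub (hw0 z' hz')).abs ?_
      filter_upwards [self_mem_nhdsWithin] with lam hl using hVlip lam hl z hz z' hz'
    · have hzc : z ∈ closure θ := subset_closure hz
      have : Nonempty {l : ℝ // 0 < l} := ⟨⟨1, one_pos⟩⟩
      have : hbar H M0 z (gradient φ z) (hessMat φ z) ≤ -w0 z := by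
        refine ciSup_le fun l => (min_le_right _ _).trans ?_
        rw [hind z hzc _ _ (hsmulsymm _ _ (hessMat_isSymm hφ z))]
        have := limit_subsolution (h := fun x p => H x p 0) (W := fun lam x => lam * V lam x)
          hθopen ?_ ?_ (fun lam hl => continuousOn_const.mul (hVsol lam hl).1) hVlip hsubV hw0
          hz hφ hmax l.2
        · linarith
        · refine hH_uc.continuousOn.comp (f := fun q : EE N × EE N => (q.1, q.2, 0))
            (by fun_prop) fun q hq => ⟨hq.1, mem_univ _, mem_univ _⟩
        · intro c hc x hx p
          simpa using hrad c hc x hx p 0 (by simp [Matrix.IsSymm])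
      linarith
  have hle : ∀ w, SubSolFam θ H M0 w → ∀ x ∈ closure θ, w x ≤ w0 x := by
    intro w hw x hx
    refine ge_of_tendsto (hw0 x hx) ?_
    filter_upwards [self_mem_nhdsWithin] with lam hl
    have hl : 0 < lam := hl
    refine comparison (h := fun x p => H x p 0) (W := fun x => lam * V lam x)
      hθne hθbdd hr hm_bd hm_uc hm_ball hρ_mono hρ0 ?_ ?_ hM0 (inv_pos.2 hl)
      hw.2.1 (hVlip lam hl) (fun z hz => (abs_le.1 (hVbd lam hl z hz)).1) ?_ (hsupV lam hl) x hx
    · intro x hx p q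
      simpa [mfroSq] using hAH2 x hx p q 0 0
    · intro x hx y hy p
      simpa using hAH3 1 one_pos x hx y hy p 0 0 (by simp [Matrix.IsSymm])
        (by simp [Matrix.IsSymm]) blockIneq_zero
    · intro z hz φ hφ hmax
      have h1 := hw.2.2 z hz φ hφ hmax
      have h2 : min M0 (H z (lam⁻¹ • gradient φ z) (lam⁻¹ • hessMat φ z)) ≤
          hbar H M0 z (gradient φ z) (hessMat φ z) :=
        le_ciSup (f := fun l : {l : ℝ // 0 < l} =>
            min M0 (H z (l.1 • gradient φ z) (l.1 • hessMat φ z)))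
          ⟨M0, by rintro _ ⟨l, rfl⟩; exact min_le_left _ _⟩ ⟨lam⁻¹, inv_pos.2 hl⟩
      rw [hind z (subset_closure hz) _ _ (hsmulsymm _ _ (hessMat_isSymm hφ z))] at h2
      linarith
  refine ⟨hw0sub, fun x hx => ?_⟩
  have hgr : IsGreatest {y : ℝ | ∃ w : EE N → ℝ, SubSolFam θ H M0 w ∧ y = w x} (w0 x) := by
    refine ⟨⟨w0, hw0sub, rfl⟩, ?_⟩
    rintro _ ⟨w, hw, rfl⟩
    exact hle w hw x hx
  exact hgr.csSup_eq.symm
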